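/- arXiv:2412.10944 — 5 statements merged into one kernel-verified Lean document; each statement's English description precedes it below -/
import Mathlib

section
/- Suppose the continuation probabilities are uniform: p_i = p for all i, with 0 < p < 1, and let τ be an integer with 2 ≤ τ ≤ n. Suppose the permutation π is such that its τ-prefix maximizes the truncated objective, i.e., Σ_{i=1}^{τ−1} p^{i+1} · d(π(i), π(i+1)) ≥ Σ_{i=1}^{τ−1} p^{i+1} · d(σ(i), σ(i+1)) for every sequence σ of τ distinct items of U. Then OHP(π) ≥ (1 − p^{τ−1} − p^{n−τ} + p^n) · OHP(π′) for every permutation π′. -/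
/-!
For uniform `p` the weights satisfy `(1 - p) * W(i) = p ^ (i + 2) - p ^ (n + 1)` (0-based `i`).
Let `A` be the truncated objective of `π`.

* Lower bound: keeping only the first `τ - 1` edges of `π`, and using
  `p ^ (n + 1) ≤ p ^ (i + 2) * p ^ (n - τ + 1)` there, gives
  `(1 - p ^ (n - τ + 1)) * A ≤ (1 - p) * OHP π`.
* Upper bound: read `π'` cyclically. Every window of `τ ≤ n` consecutive items consists of distinct
  items, so its truncated objective is at most `A`. Cutting the path `π'` into consecutive windows
  of `τ - 1` edges bounds `(1 - p) * OHP π'` by the geometric series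
  `A * (1 + p ^ (τ - 1) + ...) ≤ A / (1 - p ^ (τ - 1))`; this is `window_sum_le`.

Together, `(1 - p ^ (τ - 1)) * (1 - p ^ (n - τ + 1)) * OHP π' ≤ OHP π`, and the factor equals
`1 - p ^ (τ - 1) - p ^ (n - τ + 1) + p ^ n`, which is at least the claimed one.
-/

open Finset

/-- Prefix probability: product of continuation probabilities of the first `k` items
(0-based positions `0,…,k−1`) of the ordering `π`. -/
noncomputable def Pprefix (p : ℕ → ℝ) (π : ℕ → ℕ) (k : ℕ) : ℝ :=
  ∏ t ∈ Finset.range k, p (π t)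

/-- Sequential sum diversity `OSD(π) = Σ_{i=1}^{n−1} P_π(i+1)·(Σ_{t=1}^{i} d(π(i+1),π(t)))`,
written with 0-based positions. -/
noncomputable def OSD (n : ℕ) (d : ℕ → ℕ → ℝ) (p : ℕ → ℝ) (π : ℕ → ℕ) : ℝ :=
  ∑ i ∈ Finset.range (n - 1),
    Pprefix p π (i + 2) * ∑ t ∈ Finset.range (i + 1), d (π (i + 1)) (π t)

/-- `W_π(i) = Σ_{j=i+1}^{n} P_π(j)`, with `i` a 0-based position (paper position `i+1`). -/
noncomputable def Wcoef (n : ℕ) (p : ℕ → ℝ) (π : ℕ → ℕ) (i : ℕ) : ℝ :=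
  ∑ j ∈ Finset.Icc (i + 2) n, Pprefix p π j

/-- Ordered Hamiltonian path objective
`OHP(π) = Σ_{i=1}^{n−1} W_π(i)·d(π(i),π(i+1))`, written with 0-based positions. -/
noncomputable def OHP (n : ℕ) (d : ℕ → ℕ → ℝ) (p : ℕ → ℝ) (π : ℕ → ℕ) : ℝ :=
  ∑ i ∈ Finset.range (n - 1), Wcoef n p π i * d (π i) (π (i + 1))

/-- `π` is a permutation of the item set `U = {0,…,n−1}`. -/
def IsPermOn (n : ℕ) (π : ℕ → ℕ) : Prop :=
  Set.BijOn π (Set.Iio n) (Set.Iio n)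

/-- If every window of `r` consecutive terms of `b` has discounted sum at most `A`, then its
discounted sums of any length are at most `A / (1 - p ^ r)`. -/
lemma window_sum_le (b : ℕ → ℝ) (hb : ∀ i, 0 ≤ b i) (p A : ℝ) (hp0 : 0 < p) (hp1 : p < 1)
    (r : ℕ) (hr : 1 ≤ r) (hw : ∀ s, ∑ i ∈ range r, p ^ (i + 2) * b (s + i) ≤ A) (m : ℕ) :
    (1 - p ^ r) * ∑ i ∈ range m, p ^ (i + 2) * b i ≤ A := by
  have hq0 : 0 < p ^ r := pow_pos hp0 r
  have hq1 : p ^ r ≤ 1 := pow_le_one₀ hp0.le hp1.le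
  have hA : 0 ≤ A := le_trans
    (sum_nonneg fun i _ => mul_nonneg (pow_pos hp0 _).le (hb _)) (hw 0)
  have key : ∀ k s, (1 - p ^ r) * ∑ i ∈ range (r * k), p ^ (i + 2) * b (s + i) ≤ A := by
    intro k
    induction k with
    | zero => intro s; simpa using hA
    | succ k ih =>
      intro s
      have hshift : ∑ i ∈ range (r * k), p ^ (r + i + 2) * b (s + (r + i))
          = p ^ r * ∑ i ∈ range (r * k), p ^ (i + 2) * b (s + r + i) := by
        rw [mul_sum]
        refine sum_congr rfl fun i _ => ?_
        rw [← add_assoc s r i]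
        ring
      rw [show r * (k + 1) = r + r * k by ring, sum_range_add, hshift]
      have h1 := mul_le_mul_of_nonneg_left (hw s) (sub_nonneg.2 hq1)
      have h2 := mul_le_mul_of_nonneg_left (ih (s + r)) hq0.le
      linarith
  -- Pad the length `m` to the multiple `r * m` of `r`; the extra terms are nonnegative.
  have hsub : ∑ i ∈ range m, p ^ (i + 2) * b i ≤ ∑ i ∈ range (r * m), p ^ (i + 2) * b i :=
    sum_le_sum_of_subset_of_nonneg
      (range_subset_range.2 (Nat.le_mul_of_pos_left m hr))
      fun i _ _ => mul_nonneg (pow_pos hp0 _).le (hb _)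
  have h := key m 0
  simp only [zero_add] at h
  exact (mul_le_mul_of_nonneg_left hsub (sub_nonneg.2 hq1)).trans h

lemma Wcoef_uniform (n : ℕ) (p : ℝ) (π : ℕ → ℕ) (i : ℕ) (hi : i + 1 < n) :
    (1 - p) * Wcoef n (fun _ => p) π i = p ^ (i + 2) - p ^ (n + 1) := by
  obtain ⟨k, rfl⟩ := Nat.exists_eq_add_of_lt hi
  induction k with
  | zero => simp [Wcoef, Pprefix]; ring
  | succ k ih =>
    have h := ih (by omega)
    simp only [Wcoef, Pprefix, prod_const, card_range] at h ⊢
    rw [show i + 1 + (k + 1) + 1 = i + 1 + k + 1 + 1 by ring,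
      sum_Icc_succ_top (by omega), mul_add, h]
    ring

lemma OHP_uniform (n : ℕ) (d : ℕ → ℕ → ℝ) (p : ℝ) (π : ℕ → ℕ) :
    (1 - p) * OHP n d (fun _ => p) π
      = ∑ i ∈ range (n - 1), (p ^ (i + 2) - p ^ (n + 1)) * d (π i) (π (i + 1)) := by
  rw [OHP, mul_sum]
  refine sum_congr rfl fun i hi => ?_
  rw [mem_range] at hi
  rw [← mul_assoc, Wcoef_uniform n p π i (by omega)]

/-- with uniform probability `p < 1`, the best-`τ`-items algorithm is a
`(1 − p^{τ−1} − p^{n−τ} + p^n)`-approximation for `OHP`. -/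
theorem stmt_5 (n : ℕ) (hn : 2 ≤ n) (d : ℕ → ℕ → ℝ)
    (hd_nonneg : ∀ u < n, ∀ v < n, 0 ≤ d u v)
    (hd_symm : ∀ u < n, ∀ v < n, d u v = d v u)
    (hd_diag : ∀ u < n, d u u = 0)
    (p : ℝ) (hp0 : 0 < p) (hp1 : p < 1)
    (τ : ℕ) (hτ2 : 2 ≤ τ) (hτn : τ ≤ n)
    (π : ℕ → ℕ) (hπ : IsPermOn n π)
    (hbest : ∀ σ : ℕ → ℕ, Set.InjOn σ (Set.Iio τ) →
      Set.MapsTo σ (Set.Iio τ) (Set.Iio n) →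
      ∑ i ∈ Finset.range (τ - 1), p ^ (i + 2) * d (σ i) (σ (i + 1)) ≤
        ∑ i ∈ Finset.range (τ - 1), p ^ (i + 2) * d (π i) (π (i + 1))) :
    ∀ π', IsPermOn n π' →
      (1 - p ^ (τ - 1) - p ^ (n - τ) + p ^ n) * OHP n d (fun _ => p) π' ≤
        OHP n d (fun _ => p) π := by
  intro π' hπ'
  have hn0 : 0 < n := by omega
  set A := ∑ i ∈ Finset.range (τ - 1), p ^ (i + 2) * d (π i) (π (i + 1)) with hA
  have hdπ : ∀ i, i + 1 < n → 0 ≤ d (π i) (π (i + 1)) := fun i hi =>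
    hd_nonneg _ (hπ.mapsTo (show i < n by omega)) _ (hπ.mapsTo hi)
  have hmod : ∀ i, π' (i % n) < n := fun i => hπ'.mapsTo (Nat.mod_lt i hn0)
  have hlower : (1 - p ^ (n - τ + 1)) * A ≤ (1 - p) * OHP n d (fun _ => p) π := by
    rw [OHP_uniform, hA, mul_sum]
    refine (sum_le_sum fun i hi => ?_).trans
      (sum_le_sum_of_subset_of_nonneg (range_subset_range.2 (by omega : τ - 1 ≤ n - 1)) ?_)
    · rw [mem_range] at hi
      rw [← mul_assoc]
      refine mul_le_mul_of_nonneg_right ?_ (hdπ i (by omega))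
      have : p ^ (n + 1) ≤ p ^ (n - τ + 1 + (i + 2)) :=
        pow_le_pow_of_le_one hp0.le hp1.le (by omega)
      rw [pow_add _ (n - τ + 1)] at this
      linarith
    · intro i hi _
      rw [mem_range] at hi
      refine mul_nonneg (sub_nonneg.2 ?_) (hdπ i (by omega))
      exact pow_le_pow_of_le_one hp0.le hp1.le (by omega)
  -- Indices are taken mod `n` so that a window near the end of `π'` still has `τ` distinct items.
  have hwindow : ∀ s, ∑ i ∈ range (τ - 1),
      p ^ (i + 2) * d (π' ((s + i) % n)) (π' ((s + i + 1) % n)) ≤ A := by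
    intro s
    refine hbest (fun i => π' ((s + i) % n)) ?_ fun i _ => hmod _
    intro i hi j hj hij
    have hi' : i < τ := hi
    have hj' : j < τ := hj
    have h := hπ'.injOn (Nat.mod_lt (s + i) hn0) (Nat.mod_lt (s + j) hn0) hij
    exact Nat.ModEq.eq_of_lt_of_lt (Nat.ModEq.add_left_cancel' s h)
      (hi'.trans_le hτn) (hj'.trans_le hτn)
  have hsum := window_sum_le (fun i => d (π' (i % n)) (π' ((i + 1) % n)))
    (fun i => hd_nonneg _ (hmod _) _ (hmod _)) p A hp0 hp1 (τ - 1) (by omega) hwindow (n - 1)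
  have hdπ' : ∀ i, i + 1 < n → 0 ≤ d (π' i) (π' (i + 1)) := fun i hi =>
    hd_nonneg _ (hπ'.mapsTo (show i < n by omega)) _ (hπ'.mapsTo hi)
  set B := (1 - p) * OHP n d (fun _ => p) π' with hB
  have hB0 : 0 ≤ B := by
    rw [hB, OHP_uniform]
    refine sum_nonneg fun i hi => ?_
    rw [mem_range] at hi
    exact mul_nonneg (sub_nonneg.2 (pow_le_pow_of_le_one hp0.le hp1.le (by omega)))
      (hdπ' i (by omega))
  have hBle : B ≤ ∑ i ∈ range (n - 1), p ^ (i + 2) * d (π' (i % n)) (π' ((i + 1) % n)) := by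
    rw [hB, OHP_uniform]
    refine sum_le_sum fun i hi => ?_
    rw [mem_range] at hi
    rw [Nat.mod_eq_of_lt (by omega : i < n), Nat.mod_eq_of_lt (by omega : i + 1 < n)]
    exact mul_le_mul_of_nonneg_right (sub_le_self _ (pow_pos hp0 _).le) (hdπ' i (by omega))
  have hq : 0 ≤ 1 - p ^ (τ - 1) := sub_nonneg.2 (pow_le_one₀ hp0.le hp1.le)
  have hr : 0 ≤ 1 - p ^ (n - τ + 1) := sub_nonneg.2 (pow_le_one₀ hp0.le hp1.le)
  have hupper : (1 - p ^ (τ - 1)) * B ≤ A := (mul_le_mul_of_nonneg_left hBle hq).trans hsum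
  have hprod : p ^ n = p ^ (τ - 1) * p ^ (n - τ + 1) := by
    rw [← pow_add]
    congr 1
    omega
  have hpow : p ^ (n - τ + 1) ≤ p ^ (n - τ) :=
    pow_le_pow_of_le_one hp0.le hp1.le (Nat.le_succ _)
  have hcoef : 1 - p ^ (τ - 1) - p ^ (n - τ) + p ^ n
      ≤ (1 - p ^ (n - τ + 1)) * (1 - p ^ (τ - 1)) := by
    rw [hprod]
    linarith
  refine le_of_mul_le_mul_left ?_ (sub_pos.2 hp1)
  calc (1 - p) * ((1 - p ^ (τ - 1) - p ^ (n - τ) + p ^ n) * OHP n d (fun _ => p) π')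
      = (1 - p ^ (τ - 1) - p ^ (n - τ) + p ^ n) * B := by rw [hB]; ring
    _ ≤ (1 - p ^ (n - τ + 1)) * (1 - p ^ (τ - 1)) * B := mul_le_mul_of_nonneg_right hcoef hB0
    _ = (1 - p ^ (n - τ + 1)) * ((1 - p ^ (τ - 1)) * B) := by ring
    _ ≤ (1 - p ^ (n - τ + 1)) * A := mul_le_mul_of_nonneg_left hupper hr
    _ ≤ (1 - p) * OHP n d (fun _ => p) π := hlower
end

section
/- Suppose every continuation probability satisfies a ≤ p_i ≤ b with 0 < a ≤ b < 1. If the permutation π is such that its first two items maximize p_u · p_v · d(u, v) over all ordered pairs of distinct items, i.e., p_{π(1)} · p_{π(2)} · d(π(1), π(2)) ≥ p_u · p_v · d(u, v) for all distinct u, v ∈ U, then OHP(π) ≥ (a²(1−b)² / (a² + b²)) · OHP(π′) for every permutation π′. -/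
/-!
Let `M = p(π 0) p(π 1) d(π 0, π 1)`. All terms of `OHP` are nonnegative, and the prefix of length two
already contributes `M` to the first one, so `M ≤ OHP(π)` (`best_le_OHP`).

Conversely, for any ordering `π'` every prefix of length `i + 2 + k` contains the items at positions
`i` and `i + 1` together with `i + k` further items of probability at most `b`
(`Pprefix_le_pow_mul`). By maximality of `M`, the edge at position `i` therefore contributes at most
`∑ k, b ^ (i + k) * M ≤ b ^ i * M / (1 - b)` (`edge_le`), and a second geometric series gives
`(1 - b) ^ 2 * OHP(π') ≤ M`. This yields the factor `(1 - b) ^ 2`, which is stronger than required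
because `a ^ 2 / (a ^ 2 + b ^ 2) ≤ 1`.
-/


open Finset

theorem one_sub_mul_geom_le_one {b : ℝ} (hb0 : 0 ≤ b) (m : ℕ) :
    (1 - b) * ∑ k ∈ Finset.range m, b ^ k ≤ 1 := by
  rw [mul_neg_geom_sum]
  linarith [pow_nonneg hb0 m]

theorem Pprefix_nonneg {n : ℕ} {p : ℕ → ℝ} {σ : ℕ → ℕ} (hσ : ∀ t < n, 0 ≤ p (σ t)) {k : ℕ}
    (hk : k ≤ n) : 0 ≤ Pprefix p σ k :=
  Finset.prod_nonneg fun t ht => hσ t (by have := Finset.mem_range.mp ht; omega)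

theorem Wcoef_nonneg {n : ℕ} {p : ℕ → ℝ} {σ : ℕ → ℕ} (hσ : ∀ t < n, 0 ≤ p (σ t)) (i : ℕ) :
    0 ≤ Wcoef n p σ i :=
  Finset.sum_nonneg fun _ hj => Pprefix_nonneg hσ (Finset.mem_Icc.mp hj).2

/-- The two items at positions `i` and `i + 1` are kept; the other `i + k` items of the prefix are
each bounded by `b`. -/
theorem Pprefix_le_pow_mul {n : ℕ} {p : ℕ → ℝ} {σ : ℕ → ℕ} {b : ℝ} (hb0 : 0 ≤ b)
    (hσ : ∀ t < n, 0 ≤ p (σ t)) (hσb : ∀ t < n, p (σ t) ≤ b) (i k : ℕ) (h : i + 2 + k ≤ n) :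
    Pprefix p σ (i + 2 + k) ≤ b ^ (i + k) * (p (σ i) * p (σ (i + 1))) := by
  induction k with
  | zero =>
    have h1 : Pprefix p σ i ≤ b ^ i := by
      calc Pprefix p σ i ≤ ∏ _t ∈ Finset.range i, b :=
            Finset.prod_le_prod
              (fun t ht => hσ t (by have := Finset.mem_range.mp ht; omega))
              (fun t ht => hσb t (by have := Finset.mem_range.mp ht; omega))
        _ = b ^ i := by simp
    have h2 : Pprefix p σ (i + 2 + 0) = Pprefix p σ i * (p (σ i) * p (σ (i + 1))) := by
      simp only [Pprefix, add_zero, Finset.prod_range_succ, mul_assoc]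
    rw [h2, add_zero]
    exact mul_le_mul_of_nonneg_right h1
      (mul_nonneg (hσ i (by omega)) (hσ (i + 1) (by omega)))
  | succ k ih =>
    have h1 : Pprefix p σ (i + 2 + (k + 1)) = Pprefix p σ (i + 2 + k) * p (σ (i + 2 + k)) :=
      Finset.prod_range_succ _ _
    have hpp := mul_nonneg (hσ i (by omega)) (hσ (i + 1) (by omega))
    calc Pprefix p σ (i + 2 + (k + 1))
        = Pprefix p σ (i + 2 + k) * p (σ (i + 2 + k)) := h1
      _ ≤ (b ^ (i + k) * (p (σ i) * p (σ (i + 1)))) * b :=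
          mul_le_mul (ih (by omega)) (hσb _ (by omega)) (hσ _ (by omega)) (by positivity)
      _ = b ^ (i + (k + 1)) * (p (σ i) * p (σ (i + 1))) := by ring

/-- The contribution of the edge at position `i` is at most `b ^ i * M / (1 - b)`, where `M` bounds
its probability-weighted length. -/
theorem edge_le {n : ℕ} {d : ℕ → ℕ → ℝ} {p : ℕ → ℝ} {σ : ℕ → ℕ} {b M : ℝ} (hb0 : 0 ≤ b)
    (hb1 : b ≤ 1) (hσ : ∀ t < n, 0 ≤ p (σ t)) (hσb : ∀ t < n, p (σ t) ≤ b) (hM0 : 0 ≤ M) (i : ℕ)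
    (hd : 0 ≤ d (σ i) (σ (i + 1)))
    (hM : p (σ i) * p (σ (i + 1)) * d (σ i) (σ (i + 1)) ≤ M) :
    (1 - b) * (Wcoef n p σ i * d (σ i) (σ (i + 1))) ≤ b ^ i * M := by
  have hW : Wcoef n p σ i * d (σ i) (σ (i + 1)) ≤
      b ^ i * M * ∑ k ∈ Finset.range (n + 1 - (i + 2)), b ^ k := by
    have hIcc : Finset.Icc (i + 2) n = Finset.Ico (i + 2) (n + 1) := by
      ext j; simp only [Finset.mem_Icc, Finset.mem_Ico]; omega
    rw [Wcoef, hIcc, Finset.sum_Ico_eq_sum_range, Finset.sum_mul, Finset.mul_sum]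
    refine Finset.sum_le_sum fun k hk => ?_
    have hk' := Finset.mem_range.mp hk
    calc Pprefix p σ (i + 2 + k) * d (σ i) (σ (i + 1))
        ≤ b ^ (i + k) * (p (σ i) * p (σ (i + 1))) * d (σ i) (σ (i + 1)) :=
          mul_le_mul_of_nonneg_right (Pprefix_le_pow_mul hb0 hσ hσb i k (by omega)) hd
      _ = b ^ (i + k) * (p (σ i) * p (σ (i + 1)) * d (σ i) (σ (i + 1))) := by ring
      _ ≤ b ^ (i + k) * M := mul_le_mul_of_nonneg_left hM (by positivity)
      _ = b ^ i * M * b ^ k := by ring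
  calc (1 - b) * (Wcoef n p σ i * d (σ i) (σ (i + 1)))
      ≤ (1 - b) * (b ^ i * M * ∑ k ∈ Finset.range (n + 1 - (i + 2)), b ^ k) :=
        mul_le_mul_of_nonneg_left hW (by linarith)
    _ = b ^ i * M * ((1 - b) * ∑ k ∈ Finset.range (n + 1 - (i + 2)), b ^ k) := by ring
    _ ≤ b ^ i * M := mul_le_of_le_one_right (by positivity) (one_sub_mul_geom_le_one hb0 _)

/-- Only the length-two prefix in the weight of the first edge is kept. -/
theorem best_le_OHP {n : ℕ} (hn : 2 ≤ n) {d : ℕ → ℕ → ℝ} {p : ℕ → ℝ} {σ : ℕ → ℕ}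
    (hσ : ∀ t < n, 0 ≤ p (σ t)) (hd : ∀ i, i + 1 < n → 0 ≤ d (σ i) (σ (i + 1))) :
    p (σ 0) * p (σ 1) * d (σ 0) (σ 1) ≤ OHP n d p σ := by
  have hP : p (σ 0) * p (σ 1) ≤ Wcoef n p σ 0 := by
    have h2 : Pprefix p σ 2 = p (σ 0) * p (σ 1) := by
      simp [Pprefix, Finset.prod_range_succ]
    rw [← h2]
    exact Finset.single_le_sum (f := fun j => Pprefix p σ j)
      (fun j hj => Pprefix_nonneg hσ (Finset.mem_Icc.mp hj).2)
      (Finset.mem_Icc.mpr ⟨by omega, hn⟩)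
  refine (mul_le_mul_of_nonneg_right hP (hd 0 (by omega))).trans ?_
  exact Finset.single_le_sum (f := fun i => Wcoef n p σ i * d (σ i) (σ (i + 1)))
    (fun i hi => mul_nonneg (Wcoef_nonneg hσ i)
      (hd i (by have := Finset.mem_range.mp hi; omega)))
    (Finset.mem_range.mpr (by omega))

/-- the greedy algorithm (best first edge) with probabilities in `[a,b]`
is an `(a²(1−b)²/(a²+b²))`-approximation for `OHP`. -/
theorem stmt_8 (n : ℕ) (hn : 2 ≤ n) (d : ℕ → ℕ → ℝ) (p : ℕ → ℝ)
    (hd_nonneg : ∀ u < n, ∀ v < n, 0 ≤ d u v)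
    (hd_symm : ∀ u < n, ∀ v < n, d u v = d v u)
    (hd_diag : ∀ u < n, d u u = 0)
    (a b : ℝ) (ha : 0 < a) (hab : a ≤ b) (hb : b < 1)
    (hp : ∀ i < n, a ≤ p i ∧ p i ≤ b)
    (π : ℕ → ℕ) (hπ : IsPermOn n π)
    (hbest : ∀ u < n, ∀ v < n, u ≠ v →
      p u * p v * d u v ≤ p (π 0) * p (π 1) * d (π 0) (π 1)) :
    ∀ π', IsPermOn n π' →
      a ^ 2 * (1 - b) ^ 2 / (a ^ 2 + b ^ 2) * OHP n d p π' ≤ OHP n d p π := by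
  intro π' hπ'
  have hb0 : 0 ≤ b := ha.le.trans hab
  have hlt : ∀ {σ : ℕ → ℕ}, IsPermOn n σ → ∀ t < n, σ t < n := fun h t ht => h.mapsTo ht
  have hp0 : ∀ {σ : ℕ → ℕ}, IsPermOn n σ → ∀ t < n, 0 ≤ p (σ t) :=
    fun h t ht => ha.le.trans (hp _ (hlt h t ht)).1
  have hd : ∀ {σ : ℕ → ℕ}, IsPermOn n σ → ∀ i, i + 1 < n → 0 ≤ d (σ i) (σ (i + 1)) :=
    fun h i hi => hd_nonneg _ (hlt h i (by omega)) _ (hlt h (i + 1) hi)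
  have hlow := best_le_OHP hn (hp0 hπ) (hd hπ)
  set M := p (π 0) * p (π 1) * d (π 0) (π 1) with hMdef
  have hM0 : 0 ≤ M :=
    mul_nonneg (mul_nonneg (hp0 hπ 0 (by omega)) (hp0 hπ 1 (by omega))) (hd hπ 0 (by omega))
  have hup1 : (1 - b) * OHP n d p π' ≤ M * ∑ i ∈ Finset.range (n - 1), b ^ i := by
    rw [OHP, Finset.mul_sum, Finset.mul_sum]
    refine Finset.sum_le_sum fun i hi => ?_
    have hi' : i + 1 < n := by have := Finset.mem_range.mp hi; omega
    have hne : π' i ≠ π' (i + 1) := fun h => by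
      have := hπ'.injOn (show i < n by omega) hi' h
      omega
    rw [mul_comm M]
    exact edge_le hb0 hb.le (hp0 hπ') (fun t ht => (hp _ (hlt hπ' t ht)).2) hM0 i (hd hπ' i hi')
      (hbest _ (hlt hπ' i (by omega)) _ (hlt hπ' (i + 1) hi') hne)
  have hup : (1 - b) ^ 2 * OHP n d p π' ≤ M := by
    calc (1 - b) ^ 2 * OHP n d p π' = (1 - b) * ((1 - b) * OHP n d p π') := by ring
      _ ≤ (1 - b) * (M * ∑ i ∈ Finset.range (n - 1), b ^ i) :=
          mul_le_mul_of_nonneg_left hup1 (by linarith)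
      _ = M * ((1 - b) * ∑ i ∈ Finset.range (n - 1), b ^ i) := by ring
      _ ≤ M := mul_le_of_le_one_right hM0 (one_sub_mul_geom_le_one hb0 _)
  have hfac : a ^ 2 / (a ^ 2 + b ^ 2) ≤ 1 :=
    div_le_one_of_le₀ (by linarith [sq_nonneg b]) (by positivity)
  calc a ^ 2 * (1 - b) ^ 2 / (a ^ 2 + b ^ 2) * OHP n d p π'
      = a ^ 2 / (a ^ 2 + b ^ 2) * ((1 - b) ^ 2 * OHP n d p π') := by ring
    _ ≤ a ^ 2 / (a ^ 2 + b ^ 2) * M := mul_le_mul_of_nonneg_left hup (by positivity)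
    _ ≤ M := mul_le_of_le_one_left hM0 hfac
    _ ≤ OHP n d p π := hlow
end

section
/- Suppose the continuation probabilities are uniform: p_i = p for all i, with 0 ≤ p ≤ 1. Then every permutation π satisfies OSD(π) ≥ p^n · OSD(π′) for every permutation π′. (This is the quantitative core of the statement that when p^n = c − 1/Θ(n) for a constant c, any ordering of the items yields a (c − 1/Θ(n))-approximation for maximizing sequential sum diversity.) -/
/-!
Let `S` be the sum of `d` over all unordered pairs of distinct items. Each weight `P_π(i+1)` in
`OSD(π)` is a power `p ^ k` with `k ≤ n`, so it lies between `p ^ n` and `1`; without the weights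
the sum runs over every unordered pair exactly once, whatever the ordering. Hence
`p ^ n * S ≤ OSD(π)` and `OSD(π') ≤ S`, and the claim follows on multiplying the second inequality
by `p ^ n`. The independence of the ordering is obtained by doubling: for a symmetric
function vanishing on the diagonal, twice the sum over pairs is the sum over the full square
(`two_mul_sum_lower`), and the latter is invariant under reindexing by a permutation
(`sum_square_perm`).
-/

open Finset

theorem two_mul_sum_lower (m : ℕ) (f : ℕ → ℕ → ℝ)
    (hsymm : ∀ i < m + 1, ∀ j < m + 1, f i j = f j i) (hdiag : ∀ i < m + 1, f i i = 0) :
    2 * ∑ i ∈ Finset.range m, ∑ t ∈ Finset.range (i + 1), f (i + 1) t =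
      ∑ i ∈ Finset.range (m + 1), ∑ j ∈ Finset.range (m + 1), f i j := by
  induction m with
  | zero => simp [hdiag 0 (by omega)]
  | succ m ih =>
    have ih' := ih (fun i hi j hj => hsymm i (by omega) j (by omega))
      (fun i hi => hdiag i (by omega))
    -- the new column equals the new row, and the new corner vanishes
    have hcol : ∑ i ∈ Finset.range (m + 1), f i (m + 1) =
        ∑ t ∈ Finset.range (m + 1), f (m + 1) t :=
      Finset.sum_congr rfl fun i hi =>
        hsymm i (by have := Finset.mem_range.1 hi; omega) (m + 1) (by omega)
    have hcorner := hdiag (m + 1) (by omega)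
    rw [Finset.sum_range_succ, mul_add, ih', Finset.sum_range_succ _ (m + 1)]
    simp_rw [Finset.sum_range_succ _ (m + 1)]
    rw [Finset.sum_add_distrib, hcol, hcorner]
    ring

theorem sum_range_perm {n : ℕ} {π : ℕ → ℕ} (hπ : IsPermOn n π) (g : ℕ → ℝ) :
    ∑ i ∈ Finset.range n, g (π i) = ∑ i ∈ Finset.range n, g i := by
  refine Finset.sum_bij (fun i _ => π i) ?_ ?_ ?_ (fun _ _ => rfl)
  · intro i hi
    exact Finset.mem_range.2 (hπ.mapsTo (Finset.mem_range.1 hi))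
  · intro i hi j hj h
    exact hπ.injOn (Finset.mem_range.1 hi) (Finset.mem_range.1 hj) h
  · intro j hj
    obtain ⟨i, hi, h⟩ := hπ.surjOn (Finset.mem_range.1 hj)
    exact ⟨i, Finset.mem_range.2 hi, h⟩

theorem sum_square_perm {n : ℕ} {π : ℕ → ℕ} (hπ : IsPermOn n π) (d : ℕ → ℕ → ℝ) :
    ∑ i ∈ Finset.range n, ∑ j ∈ Finset.range n, d (π i) (π j) =
      ∑ i ∈ Finset.range n, ∑ j ∈ Finset.range n, d i j := by
  simp_rw [fun i => sum_range_perm hπ (d (π i))]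
  exact sum_range_perm hπ fun u => ∑ j ∈ Finset.range n, d u j

/-- The sum of the distances of all pairs of items, enumerated along the ordering `π`: this is
`OSD` with every prefix probability replaced by `1`. -/
noncomputable def pairSum (n : ℕ) (d : ℕ → ℕ → ℝ) (π : ℕ → ℕ) : ℝ :=
  ∑ i ∈ Finset.range (n - 1), ∑ t ∈ Finset.range (i + 1), d (π (i + 1)) (π t)

theorem two_mul_pairSum {n : ℕ} (hn : 1 ≤ n) {d : ℕ → ℕ → ℝ}
    (hd_symm : ∀ u < n, ∀ v < n, d u v = d v u) (hd_diag : ∀ u < n, d u u = 0)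
    {π : ℕ → ℕ} (hπ : IsPermOn n π) :
    2 * pairSum n d π = ∑ i ∈ Finset.range n, ∑ j ∈ Finset.range n, d i j := by
  obtain ⟨m, rfl⟩ := Nat.exists_eq_add_of_le' hn
  rw [← sum_square_perm hπ d]
  exact two_mul_sum_lower m (fun i j => d (π i) (π j))
    (fun i hi j hj => hd_symm _ (hπ.mapsTo hi) _ (hπ.mapsTo hj))
    (fun i hi => hd_diag _ (hπ.mapsTo hi))

theorem inner_sum_nonneg {n : ℕ} {d : ℕ → ℕ → ℝ} (hd_nonneg : ∀ u < n, ∀ v < n, 0 ≤ d u v)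
    {π : ℕ → ℕ} (hπ : IsPermOn n π) {i : ℕ} (hi : i ∈ Finset.range (n - 1)) :
    0 ≤ ∑ t ∈ Finset.range (i + 1), d (π (i + 1)) (π t) := by
  have hi' := Finset.mem_range.1 hi
  refine Finset.sum_nonneg fun t ht => ?_
  have ht' := Finset.mem_range.1 ht
  exact hd_nonneg _ (hπ.mapsTo (show i + 1 < n by omega)) _ (hπ.mapsTo (show t < n by omega))

/-- with uniform continuation probability `p`, any ordering is a
`p^n`-approximation for maximizing sequential sum diversity. -/
theorem stmt_9 (n : ℕ) (hn : 2 ≤ n) (d : ℕ → ℕ → ℝ)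
    (hd_nonneg : ∀ u < n, ∀ v < n, 0 ≤ d u v)
    (hd_symm : ∀ u < n, ∀ v < n, d u v = d v u)
    (hd_diag : ∀ u < n, d u u = 0)
    (p : ℝ) (hp0 : 0 ≤ p) (hp1 : p ≤ 1) :
    ∀ π, IsPermOn n π → ∀ π', IsPermOn n π' →
      p ^ n * OSD n d (fun _ => p) π' ≤ OSD n d (fun _ => p) π := by
  intro π hπ π' hπ'
  have hP : ∀ (σ : ℕ → ℕ) k, Pprefix (fun _ => p) σ k = p ^ k := fun σ k => by simp [Pprefix]
  have hupper : OSD n d (fun _ => p) π' ≤ pairSum n d π' := by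
    refine Finset.sum_le_sum fun i hi => ?_
    rw [hP]
    exact mul_le_of_le_one_left (inner_sum_nonneg hd_nonneg hπ' hi) (pow_le_one₀ hp0 hp1)
  have hlower : p ^ n * pairSum n d π ≤ OSD n d (fun _ => p) π := by
    rw [pairSum, Finset.mul_sum]
    refine Finset.sum_le_sum fun i hi => ?_
    have hi' := Finset.mem_range.1 hi
    rw [hP]
    exact mul_le_mul_of_nonneg_right (pow_le_pow_of_le_one hp0 hp1 (by omega))
      (inner_sum_nonneg hd_nonneg hπ hi)
  have heq : pairSum n d π' = pairSum n d π := by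
    have h := two_mul_pairSum (by omega) hd_symm hd_diag hπ
    have h' := two_mul_pairSum (by omega) hd_symm hd_diag hπ'
    linarith
  calc p ^ n * OSD n d (fun _ => p) π' ≤ p ^ n * pairSum n d π' :=
        mul_le_mul_of_nonneg_left hupper (pow_nonneg hp0 n)
    _ = p ^ n * pairSum n d π := by rw [heq]
    _ ≤ OSD n d (fun _ => p) π := hlower
end

section
/- Suppose every continuation probability satisfies a ≤ p_i ≤ b with 0 < a ≤ b < 1, and let π* be a permutation maximizing OSD over all permutations of U. Then OSD(π*) ≤ (b(1−a) / (a(1−b))) · OHP(π*). -/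
/-!
Write `D k = ∑ t < k, d (π k) (π t)` for the distance from the item in position `k` to all earlier
ones and `q x = x / (1 - x)` for the odds. Exchanging the items in positions `k` and `k + 1` changes
only the two corresponding terms of `OSD`, so optimality of `π` yields (`adjacent_exchange`)

  `q_{k+1} * (D (k+1) - d (π k) (π (k+1))) ≤ q_k * D k`.

Telescoping from `D 0 = 0` gives (`odds_mul_backDist_le`)
`q_k * D k ≤ ∑ i < k, q_{i+1} * d (π i) (π (i+1))`. Since `x / (1 - x)` is increasing, each odds lies
between `a / (1 - a)` and `b / (1 - b)`, hence `D k ≤ C * ∑ i < k, d (π i) (π (i+1))` with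
`C = b (1 - a) / (a (1 - b))`. Weighting by the prefix probabilities, summing over `k` and exchanging
the order of summation turns the right-hand side into `C * OHP`. The triangle inequality plays no
role.
-/

open Finset

/-- The total distance from the item in position `k` to the items in earlier positions. -/
noncomputable def backDist (d : ℕ → ℕ → ℝ) (π : ℕ → ℕ) (k : ℕ) : ℝ :=
  ∑ t ∈ Finset.range k, d (π k) (π t)

/-- `OSD` as a sum over all positions: the term of position `0` vanishes. -/
lemma OSD_eq_sum_backDist (n : ℕ) (hn : 1 ≤ n) (d : ℕ → ℕ → ℝ) (p : ℕ → ℝ) (π : ℕ → ℕ) :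
    OSD n d p π = ∑ k ∈ Finset.range n, Pprefix p π (k + 1) * backDist d π k := by
  obtain ⟨m, rfl⟩ : ∃ m, n = m + 1 := ⟨n - 1, by omega⟩
  rw [Finset.sum_range_succ']
  simp [OSD, backDist]

/-- Exchanging the items in positions `k` and `k + 1` permutes the positions below any `j` other
than `k + 1`, so it does not change a sum over them. -/
lemma sum_swap_adjacent (f : ℕ → ℝ) {j k : ℕ} (h : j ≠ k + 1) :
    ∑ t ∈ Finset.range j, f (Equiv.swap k (k + 1) t) = ∑ t ∈ Finset.range j, f t := by
  rcases Nat.lt_or_gt_of_ne h with h | h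
  · refine Finset.sum_congr rfl fun t ht => ?_
    rw [Finset.mem_range] at ht
    rw [Equiv.swap_apply_of_ne_of_ne (by omega) (by omega)]
  · refine Equiv.Perm.sum_comp _ _ f fun t ht => ?_
    have := (Equiv.swap_apply_ne_self_iff.1 ht).2
    simp only [Finset.coe_range, Set.mem_Iio]
    omega

/-- Multiplicative form of `sum_swap_adjacent`, for prefix probabilities. -/
lemma Pprefix_swap_adjacent (p : ℕ → ℝ) (π : ℕ → ℕ) {j k : ℕ} (h : j ≠ k + 1) :
    Pprefix p (π ∘ Equiv.swap k (k + 1)) j = Pprefix p π j := by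
  unfold Pprefix
  rcases Nat.lt_or_gt_of_ne h with h | h
  · refine Finset.prod_congr rfl fun t ht => ?_
    rw [Finset.mem_range] at ht
    rw [Function.comp_apply, Equiv.swap_apply_of_ne_of_ne (by omega) (by omega)]
  · refine Equiv.Perm.prod_comp _ _ (fun t => p (π t)) fun t ht => ?_
    have := (Equiv.swap_apply_ne_self_iff.1 ht).2
    simp only [Finset.coe_range, Set.mem_Iio]
    omega

lemma isPermOn_swap {n : ℕ} {π : ℕ → ℕ} (hπ : IsPermOn n π) {k : ℕ} (hk : k + 1 < n) :
    IsPermOn n (π ∘ Equiv.swap k (k + 1)) := by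
  have hmaps : Set.MapsTo (Equiv.swap k (k + 1)) (Set.Iio n) (Set.Iio n) := by
    intro t ht
    simp only [Set.mem_Iio] at ht ⊢
    rw [Equiv.swap_apply_def]
    split_ifs <;> omega
  refine Set.BijOn.comp hπ ⟨hmaps, (Equiv.injective _).injOn, fun t ht => ?_⟩
  exact ⟨Equiv.swap k (k + 1) t, hmaps ht, Equiv.swap_apply_self _ _ _⟩

/-- The change in `OSD` under the exchange of positions `k` and `k + 1`. The distance between the
two exchanged items contributes equally to both orderings, so it cancels. -/
lemma OSD_sub_OSD_swap (n : ℕ) (d : ℕ → ℕ → ℝ) (p : ℕ → ℝ) (π : ℕ → ℕ) {k : ℕ} (hk : k + 1 < n)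
    (hsymm : d (π k) (π (k + 1)) = d (π (k + 1)) (π k)) :
    OSD n d p π - OSD n d p (π ∘ Equiv.swap k (k + 1)) =
      Pprefix p π k * (p (π k) * (1 - p (π (k + 1))) * backDist d π k
        - p (π (k + 1)) * (1 - p (π k)) * ∑ t ∈ Finset.range k, d (π (k + 1)) (π t)) := by
  rw [OSD_eq_sum_backDist n (by omega), OSD_eq_sum_backDist n (by omega), ← Finset.sum_sub_distrib]
  rw [← Finset.sum_subset (s₁ := {k, k + 1}), Finset.sum_pair (by omega)]
  · have hP : Pprefix p (π ∘ Equiv.swap k (k + 1)) (k + 1) = Pprefix p π k * p (π (k + 1)) := by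
      have := Pprefix_swap_adjacent p π (j := k) (k := k) (by omega)
      rw [← this]
      simp [Pprefix, Finset.prod_range_succ]
    have hD : ∀ j, ∑ t ∈ Finset.range k, d j ((π ∘ Equiv.swap k (k + 1)) t)
        = ∑ t ∈ Finset.range k, d j (π t) := fun j =>
      sum_swap_adjacent (fun t => d j (π t)) (by omega)
    rw [hP, Pprefix_swap_adjacent p π (j := k + 1 + 1) (by omega)]
    simp only [backDist, Finset.sum_range_succ, hD]
    simp only [Pprefix, Finset.prod_range_succ, Function.comp_apply, Equiv.swap_apply_left,
      Equiv.swap_apply_right, hsymm]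
    ring
  · intro t ht
    simp only [Finset.mem_insert, Finset.mem_singleton, Finset.mem_range] at ht ⊢
    omega
  · intro j _ hj
    simp only [Finset.mem_insert, Finset.mem_singleton, not_or] at hj
    rw [Pprefix_swap_adjacent p π (by omega), sub_eq_zero]
    congr 1
    unfold backDist
    simp only [Function.comp_apply, Equiv.swap_apply_of_ne_of_ne hj.1 hj.2]
    exact (sum_swap_adjacent (fun t => d (π j) (π t)) hj.2).symm

/-- Local optimality under the exchange of positions `k` and `k + 1`, stated with the odds
`p / (1 - p)`. -/
lemma adjacent_exchange (n : ℕ) (d : ℕ → ℕ → ℝ) (p : ℕ → ℝ) (π : ℕ → ℕ) {k : ℕ} (hk : k + 1 < n)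
    (hp : ∀ i < n, 0 < p (π i) ∧ p (π i) < 1)
    (hsymm : d (π k) (π (k + 1)) = d (π (k + 1)) (π k))
    (hopt : OSD n d p (π ∘ Equiv.swap k (k + 1)) ≤ OSD n d p π) :
    p (π (k + 1)) / (1 - p (π (k + 1))) * ∑ t ∈ Finset.range k, d (π (k + 1)) (π t)
      ≤ p (π k) / (1 - p (π k)) * backDist d π k := by
  have hP : 0 < Pprefix p π k := Finset.prod_pos fun t ht => by
    rw [Finset.mem_range] at ht
    exact (hp t (by omega)).1
  have h := OSD_sub_OSD_swap n d p π hk hsymm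
  have h' := nonneg_of_mul_nonneg_right (h ▸ sub_nonneg.2 hopt) hP
  have h1 : 0 < 1 - p (π k) := sub_pos.2 (hp k (by omega)).2
  have h2 : 0 < 1 - p (π (k + 1)) := sub_pos.2 (hp (k + 1) hk).2
  rw [div_mul_eq_mul_div, div_mul_eq_mul_div, div_le_div_iff₀ h2 h1]
  linarith

/-- The telescoped form of `adjacent_exchange`. -/
lemma odds_mul_backDist_le (n : ℕ) (d : ℕ → ℕ → ℝ) (p : ℕ → ℝ) (π : ℕ → ℕ)
    (hp : ∀ i < n, 0 < p (π i) ∧ p (π i) < 1)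
    (hsymm : ∀ k, k + 1 < n → d (π k) (π (k + 1)) = d (π (k + 1)) (π k))
    (hopt : ∀ k, k + 1 < n → OSD n d p (π ∘ Equiv.swap k (k + 1)) ≤ OSD n d p π) (k : ℕ)
    (hk : k < n) :
    p (π k) / (1 - p (π k)) * backDist d π k ≤
      ∑ i ∈ Finset.range k, p (π (i + 1)) / (1 - p (π (i + 1))) * d (π i) (π (i + 1)) := by
  induction k with
  | zero => simp [backDist]
  | succ k ih =>
    have h := adjacent_exchange n d p π hk hp (hsymm k hk) (hopt k hk)
    rw [Finset.sum_range_succ, hsymm k hk, backDist, Finset.sum_range_succ, mul_add]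
    linarith [ih (by omega)]

/-- `OHP` with the order of summation exchanged. -/
lemma OHP_eq_sum_prefix (n : ℕ) (d : ℕ → ℕ → ℝ) (p : ℕ → ℝ) (π : ℕ → ℕ) :
    OHP n d p π = ∑ k ∈ Finset.range n, Pprefix p π (k + 1) *
      ∑ i ∈ Finset.range k, d (π i) (π (i + 1)) := by
  have hW : ∀ i, Wcoef n p π i = ∑ k ∈ Finset.Ico (i + 1) n, Pprefix p π (k + 1) := fun i => by
    rw [Finset.sum_Ico_add' (fun j => Pprefix p π j)]
    rfl
  simp only [OHP, hW, Finset.sum_mul, Finset.mul_sum]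
  refine Finset.sum_comm' fun i k => ?_
  simp only [Finset.mem_range, Finset.mem_Ico]
  omega

/-- for an OSD-optimal ordering `π*` with probabilities in `[a,b]`,
`OSD(π*) ≤ (b(1−a)/(a(1−b)))·OHP(π*)`. -/
theorem stmt_13 (n : ℕ) (hn : 2 ≤ n) (d : ℕ → ℕ → ℝ) (p : ℕ → ℝ)
    (hd_nonneg : ∀ u < n, ∀ v < n, 0 ≤ d u v)
    (hd_symm : ∀ u < n, ∀ v < n, d u v = d v u)
    (hd_diag : ∀ u < n, d u u = 0)
    (a b : ℝ) (ha : 0 < a) (hab : a ≤ b) (hb : b < 1)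
    (hp : ∀ i < n, a ≤ p i ∧ p i ≤ b)
    (π : ℕ → ℕ) (hπ : IsPermOn n π)
    (hopt : ∀ π', IsPermOn n π' → OSD n d p π' ≤ OSD n d p π) :
    OSD n d p π ≤ b * (1 - a) / (a * (1 - b)) * OHP n d p π := by
  have hlt : ∀ i < n, π i < n := fun i hi => hπ.mapsTo hi
  have hp01 : ∀ i < n, 0 < p (π i) ∧ p (π i) < 1 := fun i hi =>
    ⟨ha.trans_le (hp _ (hlt i hi)).1, (hp _ (hlt i hi)).2.trans_lt hb⟩
  have hb' : 0 < 1 - b := sub_pos.2 hb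
  have ha' : 0 < 1 - a := by linarith
  have hD : ∀ k < n, backDist d π k ≤
      b * (1 - a) / (a * (1 - b)) * ∑ i ∈ Finset.range k, d (π i) (π (i + 1)) := by
    intro k hk
    have htel := odds_mul_backDist_le n d p π hp01
      (fun k hk => hd_symm _ (hlt k (by omega)) _ (hlt _ hk))
      (fun k hk => hopt _ (isPermOn_swap hπ hk)) k hk
    have hD0 : 0 ≤ backDist d π k := Finset.sum_nonneg fun t ht =>
      hd_nonneg _ (hlt k hk) _ (hlt t ((Finset.mem_range.1 ht).trans hk))
    have hlow : a / (1 - a) ≤ p (π k) / (1 - p (π k)) := by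
      have := hp01 k hk
      have := hp _ (hlt k hk)
      rw [div_le_div_iff₀ ha' (by linarith)]
      linarith
    have hup : ∑ i ∈ Finset.range k, p (π (i + 1)) / (1 - p (π (i + 1))) * d (π i) (π (i + 1))
        ≤ b / (1 - b) * ∑ i ∈ Finset.range k, d (π i) (π (i + 1)) := by
      rw [Finset.mul_sum]
      refine Finset.sum_le_sum fun i hi => ?_
      have hi : i + 1 < n := by
        have := Finset.mem_range.1 hi
        omega
      refine mul_le_mul_of_nonneg_right ?_ (hd_nonneg _ (hlt i (by omega)) _ (hlt _ hi))
      have := hp01 _ hi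
      have := hp _ (hlt _ hi)
      rw [div_le_div_iff₀ (by linarith) hb']
      linarith
    have hmain : a / (1 - a) * backDist d π k
        ≤ b / (1 - b) * ∑ i ∈ Finset.range k, d (π i) (π (i + 1)) :=
      (mul_le_mul_of_nonneg_right hlow hD0).trans (htel.trans hup)
    rw [← le_div_iff₀' (by positivity)] at hmain
    refine hmain.trans_eq ?_
    field_simp
  rw [OSD_eq_sum_backDist n (by omega), OHP_eq_sum_prefix, Finset.mul_sum]
  refine Finset.sum_le_sum fun k hk => ?_
  have hk : k < n := Finset.mem_range.1 hk
  have hP : 0 ≤ Pprefix p π (k + 1) := Finset.prod_nonneg fun t ht =>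
    (hp01 t (by have := Finset.mem_range.1 ht; omega)).1.le
  rw [mul_left_comm]
  exact mul_le_mul_of_nonneg_left (hD k hk) hP
end

section
/- Suppose the continuation probabilities are uniform: p_i = p for all i, with 0 < p < 1, let τ be an integer with 2 ≤ τ ≤ n, and let ℓ be the maximum over all sequences σ of τ distinct items of U of Σ_{i=1}^{τ−1} p^{i+1} · d(σ(i), σ(i+1)). Then every permutation π′ satisfies Σ_{i=1}^{n−1} p^{i+1} · d(π′(i), π′(i+1)) ≤ ℓ / (1 − p^{τ−1}), and consequently OHP(π′) ≤ ℓ / ((1 − p)(1 − p^{τ−1})). -/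
/-!
Extend the path `π'` to the cyclic tour `i ↦ π' (i % n)`. Since `τ ≤ n`, any `τ` consecutive
vertices of the tour are distinct, so after rescaling the weights each window of `τ - 1` consecutive
edges has weighted length at most `ℓ`. Cutting the tour into consecutive windows, the `j`-th one
carries an extra factor `p ^ ((τ - 1) * j)`, and summing the geometric series gives the bound
`ℓ / (1 - p ^ (τ - 1))` (`block_sum_le`). Going around the tour instead of stopping at the end of
the path only adds nonnegative terms, and removes the need to treat a shorter last window
separately. The bound on `OHP` then follows from `W_π(i) ≤ p ^ (i + 2) / (1 - p)` (0-based `i`).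
-/

open Finset

/-- If every window of `m` consecutive terms of `e` has discounted sum at most `ℓ`, then `K`
consecutive windows together have discounted sum at most `ℓ / (1 - p ^ m)`: a window followed by
the remaining ones costs at most `ℓ + p ^ m * (ℓ / (1 - p ^ m)) = ℓ / (1 - p ^ m)`. -/
lemma block_sum_le (p ℓ : ℝ) (hp0 : 0 < p) (hp1 : p < 1) (m : ℕ) (hm : m ≠ 0) (hℓ : 0 ≤ ℓ)
    (e : ℕ → ℝ) (he : ∀ s, ∑ i ∈ Finset.range m, p ^ (i + 2) * e (s + i) ≤ ℓ) (K : ℕ) :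
    ∀ s, ∑ i ∈ Finset.range (K * m), p ^ (i + 2) * e (s + i) ≤ ℓ / (1 - p ^ m) := by
  have hq : 0 < 1 - p ^ m := sub_pos.2 (pow_lt_one₀ hp0.le hp1 hm)
  induction K with
  | zero => intro s; simpa using div_nonneg hℓ hq.le
  | succ K ih =>
    intro s
    rw [show (K + 1) * m = m + K * m by ring, Finset.sum_range_add]
    have h2 : ∑ x ∈ Finset.range (K * m), p ^ (m + x + 2) * e (s + (m + x))
        = p ^ m * ∑ i ∈ Finset.range (K * m), p ^ (i + 2) * e (s + m + i) := by
      rw [Finset.mul_sum]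
      refine Finset.sum_congr rfl fun x _ => ?_
      rw [← add_assoc s m x]
      ring
    have h3 := mul_le_mul_of_nonneg_left (ih (s + m)) (pow_pos hp0 m).le
    have h4 : ℓ + p ^ m * (ℓ / (1 - p ^ m)) = ℓ / (1 - p ^ m) := by
      field_simp
      ring
    rw [h2]
    linarith [he s]

lemma Wcoef_const_le (n : ℕ) (p : ℝ) (hp0 : 0 < p) (hp1 : p < 1) (π : ℕ → ℕ) (i : ℕ) :
    Wcoef n (fun _ => p) π i ≤ p ^ (i + 2) / (1 - p) := by
  have h : Wcoef n (fun _ => p) π i = ∑ j ∈ Finset.Ico (i + 2) (n + 1), p ^ j := by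
    simp only [Wcoef, Pprefix, Finset.prod_const, Finset.card_range]
    refine Finset.sum_congr ?_ fun _ _ => rfl
    ext j
    simp only [Finset.mem_Icc, Finset.mem_Ico]
    omega
  rw [h]
  exact geom_sum_Ico_le_of_lt_one hp0.le hp1

/-- with uniform probability `p`, every permutation `π'` satisfies
`Σ_{i=1}^{n−1} p^{i+1} d(π′(i),π′(i+1)) ≤ ℓ/(1 − p^{τ−1})` and consequently
`OHP(π′) ≤ ℓ/((1−p)(1−p^{τ−1}))`. -/
theorem stmt_19 (n : ℕ) (hn : 2 ≤ n) (d : ℕ → ℕ → ℝ)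
    (hd_nonneg : ∀ u < n, ∀ v < n, 0 ≤ d u v)
    (hd_symm : ∀ u < n, ∀ v < n, d u v = d v u)
    (hd_diag : ∀ u < n, d u u = 0)
    (p : ℝ) (hp0 : 0 < p) (hp1 : p < 1)
    (τ : ℕ) (hτ2 : 2 ≤ τ) (hτn : τ ≤ n)
    (ℓ : ℝ)
    (hℓ : IsGreatest {x : ℝ | ∃ σ : ℕ → ℕ, Set.InjOn σ (Set.Iio τ) ∧
        Set.MapsTo σ (Set.Iio τ) (Set.Iio n) ∧
        x = ∑ i ∈ Finset.range (τ - 1), p ^ (i + 2) * d (σ i) (σ (i + 1))} ℓ) :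
    ∀ π', IsPermOn n π' →
      (∑ i ∈ Finset.range (n - 1), p ^ (i + 2) * d (π' i) (π' (i + 1)) ≤
          ℓ / (1 - p ^ (τ - 1))) ∧
        OHP n d (fun _ => p) π' ≤ ℓ / ((1 - p) * (1 - p ^ (τ - 1))) := by
  intro π' hπ
  have hn0 : 0 < n := by omega
  have hmap : ∀ i, i < n → π' i < n := fun i hi => hπ.mapsTo hi
  -- the `i`-th edge length of the cyclic tour
  let e : ℕ → ℝ := fun i => d (π' (i % n)) (π' ((i + 1) % n))
  have he0 : ∀ i, 0 ≤ e i := fun i =>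
    hd_nonneg _ (hmap _ (Nat.mod_lt _ hn0)) _ (hmap _ (Nat.mod_lt _ hn0))
  have hblock : ∀ s, ∑ i ∈ Finset.range (τ - 1), p ^ (i + 2) * e (s + i) ≤ ℓ := by
    intro s
    refine hℓ.2 ⟨fun i => π' ((s + i) % n), ?_, ?_, rfl⟩
    · intro a ha b hb hab
      have h1 : (s + a) % n = (s + b) % n :=
        hπ.injOn (Nat.mod_lt _ hn0) (Nat.mod_lt _ hn0) hab
      have h2 : a ≡ b [MOD n] := Nat.ModEq.add_left_cancel' s h1
      exact h2.eq_of_lt_of_lt (lt_of_lt_of_le ha hτn) (lt_of_lt_of_le hb hτn)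
    · intro a _
      exact hmap _ (Nat.mod_lt _ hn0)
  have hℓ0 : 0 ≤ ℓ := le_trans
    (Finset.sum_nonneg fun i _ => mul_nonneg (pow_pos hp0 _).le (he0 _)) (hblock 0)
  have hpath : ∀ i ∈ Finset.range (n - 1), e i = d (π' i) (π' (i + 1)) := by
    intro i hi
    have hi' := Finset.mem_range.1 hi
    simp only [e]
    rw [Nat.mod_eq_of_lt (by omega), Nat.mod_eq_of_lt (by omega)]
  have hmain : ∑ i ∈ Finset.range (n - 1), p ^ (i + 2) * d (π' i) (π' (i + 1)) ≤
      ℓ / (1 - p ^ (τ - 1)) := by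
    -- `n - 1` windows are more than enough to cover the `n - 1` edges of the path
    have h := block_sum_le p ℓ hp0 hp1 (τ - 1) (by omega) hℓ0 e hblock (n - 1) 0
    simp only [zero_add] at h
    refine le_trans ?_ h
    rw [Finset.sum_congr rfl fun i hi =>
      show p ^ (i + 2) * d (π' i) (π' (i + 1)) = p ^ (i + 2) * e i by rw [hpath i hi]]
    refine Finset.sum_le_sum_of_subset_of_nonneg ?_
      fun i _ _ => mul_nonneg (pow_pos hp0 _).le (he0 _)
    exact Finset.range_mono (Nat.le_mul_of_pos_right _ (by omega))
  refine ⟨hmain, ?_⟩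
  have hp : 0 < 1 - p := sub_pos.2 hp1
  calc OHP n d (fun _ => p) π'
      ≤ ∑ i ∈ Finset.range (n - 1), p ^ (i + 2) / (1 - p) * d (π' i) (π' (i + 1)) := by
        refine Finset.sum_le_sum fun i hi => mul_le_mul_of_nonneg_right
          (Wcoef_const_le n p hp0 hp1 π' i) ?_
        rw [← hpath i hi]
        exact he0 i
    _ = (∑ i ∈ Finset.range (n - 1), p ^ (i + 2) * d (π' i) (π' (i + 1))) / (1 - p) := by
        rw [Finset.sum_div]
        exact Finset.sum_congr rfl fun i _ => by ring
    _ ≤ ℓ / (1 - p ^ (τ - 1)) / (1 - p) := div_le_div_of_nonneg_right hmain hp.le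
    _ = ℓ / ((1 - p) * (1 - p ^ (τ - 1))) := by rw [div_div, mul_comm]
end
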